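/- Let η₁, η₂ : ℂ ∖ [0,+∞) → ℂ ∖ [0,+∞) be analytic functions satisfying: (a) lim_{x↑0, x<0} η_j(x) = 0; (b) π > arg η_j(z) > arg z for all z ∈ ℂ⁺; (c) η_j(conj(z)) = conj(η_j(z)) (j = 1,2). Then there exists a unique analytic function ω : ℂ ∖ [0,+∞) → ℂ ∖ [0,+∞) such that ω(z) = ω(z) · η₂( z · η₁(ω(z)) / ω(z) ) / η₁(ω(z)) for all z ∈ ℂ ∖ [0,+∞), and this ω satisfies arg z < arg ω(z) < π for all z ∈ ℂ⁺. -/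

import Mathlib

open Complex Filter Set Topology

/-- The slit plane `ℂ ∖ [0,+∞)`. -/
def SlitP : Set ℂ := {z : ℂ | z.re < 0 ∨ z.im ≠ 0}

/-!
Write `T_j w = z η_j(w) / w`. Then the equation for `ω` says that `ω(z)` is a fixed point of
`T₂ ∘ T₁`, and we obtain it by iterating this map from the starting point `z`.

If `0 < arg z ≤ arg w`, then `arg (T_j w) = arg z + arg η_j(w) - arg w` again lies between `arg z`
and `π`, so the iterates are analytic self-maps of the slit plane; as the slit plane is conformally
a disc, they form a normal family. On the negative axis `η_j` and `η_j(x) / x` are monotone, so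
there `T₂ ∘ T₁` is increasing, and `η_j(0−) = 0` provides points `a ≤ x ≤ b < 0` with
`a ≤ T₂ (T₁ a)` and `T₂ (T₁ b) ≤ b`; hence the iterates converge at negative `z` to a fixed point.
This keeps the limit functions of the family off the boundary of the slit plane, by the maximum
principle, and makes them solve the equation, by the identity theorem.

For negative `z`, comparing signs of imaginary parts forces every fixed point to be real, and there
the strict monotonicity of `η_j` leaves only one; uniqueness spreads by the identity theorem.
-/

open Function Metric
open scoped ComplexConjugate

section Arg

lemma arg_mem_Ioo_zero_pi_iff {z : ℂ} : arg z ∈ Ioo 0 Real.pi ↔ 0 < z.im := by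
  simp only [mem_Ioo, arg_lt_pi_iff, lt_iff_le_and_ne (a := (0 : ℝ)), arg_nonneg_iff,
    ne_comm (a := (0 : ℝ)), ne_eq, arg_eq_zero_iff]
  grind

lemma arg_div_eq_sub {v w : ℂ} (hv : v ≠ 0) (hw : w ≠ 0)
    (h : arg v - arg w ∈ Ioc (-Real.pi) Real.pi) : arg (v / w) = arg v - arg w := by
  rw [← arg_coe_angle_toReal_eq_arg, arg_div_coe_angle hv hw, ← Real.Angle.coe_sub,
    Real.Angle.toReal_coe_eq_self_iff_mem_Ioc.2 h]

lemma ne_zero_of_arg_pos {z : ℂ} (hz : 0 < arg z) : z ≠ 0 := by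
  rintro rfl
  simp only [arg_zero, lt_irrefl] at hz

lemma arg_div_of_arg_le {v w : ℂ} (hw : 0 < arg w) (hwv : arg w ≤ arg v) :
    arg (v / w) = arg v - arg w :=
  arg_div_eq_sub (ne_zero_of_arg_pos (hw.trans_le hwv)) (ne_zero_of_arg_pos hw)
    ⟨by linarith [Real.pi_pos], by linarith [arg_le_pi v]⟩

lemma arg_mul_div_of_arg_le {z v w : ℂ} (hz : 0 < arg z) (hzw : arg z ≤ arg w)
    (hwv : arg w ≤ arg v) : arg (z * (v / w)) = arg z + (arg v - arg w) := by
  have hw : 0 < arg w := hz.trans_le hzw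
  have hdiv := arg_div_of_arg_le hw hwv
  have hvw : v / w ≠ 0 :=
    div_ne_zero (ne_zero_of_arg_pos (hw.trans_le hwv)) (ne_zero_of_arg_pos hw)
  rw [arg_mul (ne_zero_of_arg_pos hz) hvw, hdiv]
  rw [hdiv]
  exact ⟨by linarith [Real.pi_pos], by linarith [arg_le_pi v]⟩

end Arg

section SlitPlane

lemma mem_slitP_iff_arg_ne_zero {z : ℂ} : z ∈ SlitP ↔ arg z ≠ 0 := by
  simp only [SlitP, mem_ofPred_eq, ne_eq, arg_eq_zero_iff]
  grind

lemma mem_slitP_of_arg_pos {z : ℂ} (hz : 0 < arg z) : z ∈ SlitP :=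
  mem_slitP_iff_arg_ne_zero.2 hz.ne'

lemma slitP_eq_image_neg : SlitP = Neg.neg '' slitPlane := by
  ext z
  simp [SlitP, mem_slitPlane_iff]

lemma isOpen_slitP : IsOpen SlitP := by
  rw [slitP_eq_image_neg]
  exact (Homeomorph.neg ℂ).isOpenMap _ isOpen_slitPlane

lemma isPreconnected_slitP : IsPreconnected SlitP := by
  rw [slitP_eq_image_neg]
  have hpath := starConvex_one_slitPlane.isPathConnected one_mem_slitPlane
  exact hpath.isConnected.isPreconnected.image _ continuous_neg.continuousOn

lemma neg_mem_slitPlane_iff {z : ℂ} : -z ∈ slitPlane ↔ z ∈ SlitP := by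
  simp [SlitP, mem_slitPlane_iff]

lemma ne_zero_of_mem_slitP {z : ℂ} (hz : z ∈ SlitP) : z ≠ 0 := by
  rintro rfl
  exact mem_slitP_iff_arg_ne_zero.1 hz arg_zero

lemma ofReal_mem_slitP_iff {x : ℝ} : (x : ℂ) ∈ SlitP ↔ x < 0 := by
  simp [SlitP]

lemma conj_mem_slitP_iff {z : ℂ} : conj z ∈ SlitP ↔ z ∈ SlitP := by
  simp [SlitP]

lemma arg_pos_or_arg_conj_pos {z : ℂ} (hz : z ∈ SlitP) : 0 < arg z ∨ 0 < arg (conj z) := by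
  have hz' := mem_slitP_iff_arg_ne_zero.1 hz
  rw [arg_conj]
  split_ifs <;> grind [Real.pi_pos]

lemma eqOn_of_eventually_eq_ofReal {E : Type*} [NormedAddCommGroup E] [NormedSpace ℂ E]
    [CompleteSpace E] {f g : ℂ → E} {U : Set ℂ} (hU : IsOpen U) (hUc : IsPreconnected U)
    (hf : DifferentiableOn ℂ f U) (hg : DifferentiableOn ℂ g U) {x : ℝ} (hx : (x : ℂ) ∈ U)
    (h : ∀ᶠ t : ℝ in 𝓝 x, f t = g t) : EqOn f g U := by
  refine (hf.analyticOnNhd hU).eqOn_of_preconnected_of_frequently_eq (hg.analyticOnNhd hU) hUc hx ?_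
  have hofReal : Tendsto ((↑) : ℝ → ℂ) (𝓝[≠] x) (𝓝[≠] (x : ℂ)) :=
    continuous_ofReal.continuousWithinAt.tendsto_nhdsWithin fun t ht => ofReal_injective.ne ht
  exact hofReal.frequently (h.filter_mono nhdsWithin_le_nhds).frequently

end SlitPlane

section MonotoneOnReal

lemma re_nonneg_of_hasDerivAt_of_im_nonneg {F : ℂ → ℂ} {F' : ℂ} {x : ℝ} (hF : HasDerivAt F F' x)
    (hx : (F x).im = 0) (him : ∀ᶠ t : ℝ in 𝓝[>] 0, 0 ≤ (F (x + t * I)).im) : 0 ≤ F'.re := by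
  have hline : HasDerivAt (fun t : ℝ => (x + t * I : ℂ)) I 0 := by
    simpa using ((hasDerivAt_id (0 : ℝ)).ofReal_comp.mul_const I).const_add (x : ℂ)
  have hslope : HasDerivAt (fun t : ℝ => (F (x + t * I)).im) F'.re 0 := by
    have hcomp : HasDerivAt (fun t : ℝ => F (x + t * I)) (F' * I) 0 :=
      HasDerivAt.comp (h₂ := F) (0 : ℝ) (by simpa using hF) hline
    simpa [Function.comp_def] using imCLM.hasFDerivAt.comp_hasDerivAt (0 : ℝ) hcomp
  refine ge_of_tendsto hslope.tendsto_slope_zero_right ?_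
  filter_upwards [him, self_mem_nhdsWithin] with t ht htpos
  have : 0 < t := htpos
  simp only [zero_add, ofReal_zero, zero_mul, add_zero, hx, sub_zero, smul_eq_mul]
  positivity

lemma monotoneOn_re_ofReal_of_im_nonneg {F : ℂ → ℂ} {D : Set ℝ} (hD : Convex ℝ D)
    (hF : ∀ x ∈ D, DifferentiableAt ℂ F x) (hreal : ∀ x ∈ D, (F x).im = 0)
    (him : ∀ z : ℂ, 0 < z.im → 0 ≤ (F z).im) : MonotoneOn (fun x : ℝ => (F x).re) D := by
  have hderiv : ∀ x ∈ D, HasDerivAt (fun x : ℝ => (F x).re) (deriv F x).re x := fun x hx =>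
    (hF x hx).hasDerivAt.real_of_complex
  refine monotoneOn_of_hasDerivWithinAt_nonneg hD
    (fun x hx => (hderiv x hx).continuousAt.continuousWithinAt)
    (fun x hx => (hderiv x (interior_subset hx)).hasDerivWithinAt) fun x hx => ?_
  have hxD := interior_subset hx
  refine re_nonneg_of_hasDerivAt_of_im_nonneg (hF x hxD).hasDerivAt (hreal x hxD) ?_
  filter_upwards [self_mem_nhdsWithin] with t ht
  exact him _ (by simpa using ht)

end MonotoneOnReal

section MonotoneIteration

lemma exists_tendsto_iterate_of_monotoneOn_Icc {α : Type*} [ConditionallyCompleteLinearOrder α]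
    [TopologicalSpace α] [OrderTopology α] {f : α → α} {a b x : α}
    (hmaps : MapsTo f (Icc a b) (Icc a b)) (hmono : MonotoneOn f (Icc a b))
    (hcont : ContinuousOn f (Icc a b)) (hx : x ∈ Icc a b) :
    ∃ y ∈ Icc a b, IsFixedPt f y ∧ Tendsto (fun n => f^[n] x) atTop (𝓝 y) := by
  set g : Icc a b → Icc a b := hmaps.restrict
  have hg : Monotone g := fun s t hst => hmono s.2 t.2 hst
  have hval : ∀ n, f^[n] x = (g^[n] ⟨x, hx⟩ : α) := fun n => by
    rw [MapsTo.iterate_restrict, MapsTo.val_restrict_apply]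
  have hmem : ∀ n, f^[n] x ∈ Icc a b := fun n => hmaps.iterate n hx
  have hconv : ∃ y, Tendsto (fun n => f^[n] x) atTop (𝓝 y) := by
    rcases le_total (⟨x, hx⟩ : Icc a b) (g ⟨x, hx⟩) with h | h
    · have hincr : Monotone fun n => f^[n] x := fun m n hmn => by
        simpa only [hval, Subtype.coe_le_coe] using hg.monotone_iterate_of_le_map h hmn
      exact ⟨_, tendsto_atTop_ciSup hincr ⟨b, forall_mem_range.2 fun n => (hmem n).2⟩⟩
    · have hdecr : Antitone fun n => f^[n] x := fun m n hmn => by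
        simpa only [hval, Subtype.coe_le_coe] using hg.antitone_iterate_of_map_le h hmn
      exact ⟨_, tendsto_atTop_ciInf hdecr ⟨a, forall_mem_range.2 fun n => (hmem n).1⟩⟩
  obtain ⟨y, hy⟩ := hconv
  have hyI : y ∈ Icc a b := isClosed_Icc.mem_of_tendsto hy (Eventually.of_forall hmem)
  have hgy : Tendsto (fun n => g^[n] ⟨x, hx⟩) atTop (𝓝 ⟨y, hyI⟩) := by
    simpa only [tendsto_subtype_rng, ← hval] using hy
  have hfix : IsFixedPt g ⟨y, hyI⟩ :=
    isFixedPt_of_tendsto_iterate hgy (hcont.mapsToRestrict hmaps).continuousAt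
  exact ⟨y, hyI, congrArg Subtype.val hfix, hy⟩

end MonotoneIteration

section NormalFamilies

variable {ι E : Type*} [NormedAddCommGroup E] [NormedSpace ℂ E] {U : Set ℂ} {F : ι → ℂ → E}

lemma equicontinuousOn_of_locally_bounded (hU : IsOpen U)
    (hF : ∀ i, DifferentiableOn ℂ (F i) U)
    (hb : ∀ z ∈ U, ∃ C, ∀ᶠ w in 𝓝 z, ∀ i, ‖F i w‖ ≤ C) : EquicontinuousOn F U := by
  intro z hz
  refine EquicontinuousAt.equicontinuousWithinAt ?_ U
  obtain ⟨C, hC⟩ := hb z hz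
  obtain ⟨r, hr, hball⟩ := Metric.eventually_nhds_iff_ball.1 (hC.and (hU.mem_nhds hz))
  have hCauchy : ∀ i, ∀ w ∈ ball z r, dist (F i w) (F i z) ≤ 2 * C / r * dist w z := by
    intro i w hw
    refine Complex.dist_le_div_mul_dist_of_mapsTo_ball
      ((hF i).mono fun y hy => (hball y hy).2) (fun y hy => ?_) hw
    rw [mem_closedBall, dist_eq_norm]
    calc ‖F i y - F i z‖ ≤ ‖F i y‖ + ‖F i z‖ := norm_sub_le _ _
      _ ≤ 2 * C := by linarith [(hball y hy).1 i, (hball z (mem_ball_self hr)).1 i]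
  refine Metric.equicontinuousAt_of_continuity_modulus (fun w => 2 * C / r * dist w z) ?_ F ?_
  · exact Continuous.tendsto' (by fun_prop) _ _ (by simp)
  · filter_upwards [ball_mem_nhds z hr] with w hw i
    rw [dist_comm]
    exact hCauchy i w hw

lemma differentiableOn_of_tendsto_of_locally_bounded [CompleteSpace E] {l : Filter ι} [l.NeBot]
    {G : ℂ → E} (hU : IsOpen U) (hF : ∀ i, DifferentiableOn ℂ (F i) U)
    (hb : ∀ z ∈ U, ∃ C, ∀ᶠ w in 𝓝 z, ∀ i, ‖F i w‖ ≤ C)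
    (hG : ∀ z ∈ U, Tendsto (fun i => F i z) l (𝓝 (G z))) : DifferentiableOn ℂ G U := by
  refine TendstoLocallyUniformlyOn.differentiableOn (F := F) (φ := l) ?_
    (Eventually.of_forall hF) hU
  rw [tendstoLocallyUniformlyOn_iff_forall_isCompact hU]
  intro K hKU hK
  have hequi : EquicontinuousOn F K := (equicontinuousOn_of_locally_bounded hU hF hb).mono hKU
  have hunif := (EquicontinuousOn.tendsto_uniformOnFun_iff_pi' (𝔖 := {K})
    (by simpa using hK) (by simpa using hequi) l G).2 <| by
      rw [sUnion_singleton, tendsto_pi_nhds]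
      exact fun z => hG z (hKU z.2)
  exact UniformOnFun.tendsto_iff_tendstoUniformlyOn.1 hunif K rfl

lemma exists_differentiableOn_tendsto_ultrafilter [ProperSpace E] (𝒰 : Ultrafilter ι)
    (hU : IsOpen U) (hF : ∀ i, DifferentiableOn ℂ (F i) U)
    (hb : ∀ z ∈ U, ∃ C, ∀ᶠ w in 𝓝 z, ∀ i, ‖F i w‖ ≤ C) :
    ∃ G : ℂ → E, DifferentiableOn ℂ G U ∧ ∀ z ∈ U, Tendsto (fun i => F i z) 𝒰 (𝓝 (G z)) := by
  have hlim : ∀ z ∈ U, ∃ y, Tendsto (fun i => F i z) 𝒰 (𝓝 y) := by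
    intro z hz
    obtain ⟨C, hC⟩ := hb z hz
    have hmem : closedBall 0 C ∈ 𝒰.map fun i => F i z :=
      Ultrafilter.mem_map.2 (univ_mem' fun i => mem_closedBall_zero_iff.2 (hC.self_of_nhds i))
    obtain ⟨y, -, hy⟩ := (isCompact_closedBall 0 C).ultrafilter_le_nhds _ (le_principal_iff.2 hmem)
    exact ⟨y, hy⟩
  choose! G hG using hlim
  exact ⟨G, differentiableOn_of_tendsto_of_locally_bounded hU hF hb hG, hG⟩

lemma mapsTo_ball_of_norm_le_of_exists_norm_lt {G : ℂ → ℂ} {R : ℝ} (hU : IsOpen U)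
    (hUc : IsPreconnected U) (hG : DifferentiableOn ℂ G U) (hle : ∀ z ∈ U, ‖G z‖ ≤ R)
    {z₀ : ℂ} (hz₀ : z₀ ∈ U) (hlt : ‖G z₀‖ < R) : MapsTo G U (ball 0 R) := by
  intro z hz
  rw [mem_ball_zero_iff]
  refine (hle z hz).lt_of_ne fun hmax => hlt.ne ?_
  have hconst := norm_eqOn_of_isPreconnected_of_isMaxOn hUc hU hG hz
    (fun y hy => (hle y hy).trans_eq hmax.symm)
  exact (hconst hz₀).trans hmax

end NormalFamilies

section SlitDisc

/-- The involution `z ↦ (1 - z) / (1 + z)`, exchanging the right half-plane and the unit disc. -/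
noncomputable def cayley (z : ℂ) : ℂ := (1 - z) / (1 + z)

lemma one_add_ne_zero_of_ne {z : ℂ} (hz : z ≠ -1) : 1 + z ≠ 0 := fun h =>
  hz (eq_neg_of_add_eq_zero_right h)

lemma cayley_cayley {z : ℂ} (hz : z ≠ -1) : cayley (cayley z) = z := by
  have hz' := one_add_ne_zero_of_ne hz
  have hnum : 1 - cayley z = 2 * z / (1 + z) := by rw [cayley]; field_simp; ring
  have hden : 1 + cayley z = 2 / (1 + z) := by rw [cayley]; field_simp; ring
  rw [cayley, hnum, hden]
  field_simp

lemma cayley_ne_neg_one {z : ℂ} (hz : z ≠ -1) : cayley z ≠ -1 := by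
  have hz' := one_add_ne_zero_of_ne hz
  rw [cayley, ne_eq, div_eq_iff hz']
  intro h
  exact two_ne_zero (α := ℂ) (by linear_combination h)

lemma re_cayley (z : ℂ) : (cayley z).re = (1 - ‖z‖ ^ 2) / ‖1 + z‖ ^ 2 := by
  rw [cayley, div_re, ← add_div, ← normSq_eq_norm_sq, ← normSq_eq_norm_sq, normSq_apply z]
  simp only [sub_re, add_re, one_re, sub_im, add_im, one_im]
  ring

lemma re_cayley_pos_iff {z : ℂ} (hz : z ≠ -1) : 0 < (cayley z).re ↔ ‖z‖ < 1 := by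
  have hz' : 0 < ‖1 + z‖ := norm_pos_iff.2 (one_add_ne_zero_of_ne hz)
  rw [re_cayley, div_pos_iff_of_pos_right (by positivity), sub_pos,
    sq_lt_one_iff₀ (norm_nonneg z)]

lemma norm_cayley_lt_one_iff {z : ℂ} (hz : z ≠ -1) : ‖cayley z‖ < 1 ↔ 0 < z.re := by
  rw [← re_cayley_pos_iff (cayley_ne_neg_one hz), cayley_cayley hz]

lemma differentiableAt_cayley {z : ℂ} (hz : z ≠ -1) : DifferentiableAt ℂ cayley z :=
  ((differentiableAt_const 1).sub differentiableAt_id).div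
    ((differentiableAt_const 1).add differentiableAt_id) (one_add_ne_zero_of_ne hz)

lemma re_sqrt_pos {z : ℂ} (hz : z ∈ slitPlane) : 0 < (sqrt z).re := by
  rw [sqrt, cpow_inv_two_re, Real.sqrt_pos]
  have hne : z.re ≠ -‖z‖ := fun h => mem_slitPlane_iff_not_le_zero.1 hz (re_eq_neg_norm.1 h)
  have hlt : -‖z‖ < z.re := hne.symm.lt_of_le (neg_le_of_abs_le (abs_re_le_norm z))
  linarith

lemma sq_mem_slitPlane {z : ℂ} (hz : 0 < z.re) : z ^ 2 ∈ slitPlane := by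
  rw [mem_slitPlane_iff, pow_two, mul_re, mul_im]
  by_cases him : z.im = 0
  · left; simp only [him]; nlinarith
  · right; intro h; apply him; nlinarith

/-- A conformal map from `SlitP` onto the unit disc. -/
noncomputable def slitToDisc (w : ℂ) : ℂ := cayley (sqrt (-w))

/-- The inverse of `slitToDisc`, from the unit disc onto `SlitP`. -/
noncomputable def discToSlit (v : ℂ) : ℂ := -cayley v ^ 2

lemma ne_neg_one_of_re_pos {z : ℂ} (hz : 0 < z.re) : z ≠ -1 := by
  rintro rfl
  norm_num at hz

lemma ne_neg_one_of_norm_lt_one {z : ℂ} (hz : ‖z‖ < 1) : z ≠ -1 := by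
  rintro rfl
  norm_num at hz

lemma norm_slitToDisc_lt_one {w : ℂ} (hw : w ∈ SlitP) : ‖slitToDisc w‖ < 1 := by
  have hre := re_sqrt_pos (neg_mem_slitPlane_iff.2 hw)
  exact (norm_cayley_lt_one_iff (ne_neg_one_of_re_pos hre)).2 hre

lemma differentiableOn_slitToDisc : DifferentiableOn ℂ slitToDisc SlitP := by
  intro w hw
  have hw' := neg_mem_slitPlane_iff.2 hw
  have hsqrt : DifferentiableAt ℂ (fun w => sqrt (-w)) w :=
    (differentiableAt_sqrt hw').comp w differentiableAt_id.neg
  exact ((differentiableAt_cayley (ne_neg_one_of_re_pos (re_sqrt_pos hw'))).comp w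
    hsqrt).differentiableWithinAt

lemma discToSlit_slitToDisc {w : ℂ} (hw : w ∈ SlitP) : discToSlit (slitToDisc w) = w := by
  have hre := re_sqrt_pos (neg_mem_slitPlane_iff.2 hw)
  rw [discToSlit, slitToDisc, cayley_cayley (ne_neg_one_of_re_pos hre), sqrt,
    cpow_ofNat_inv_pow, neg_neg]

lemma mapsTo_discToSlit : MapsTo discToSlit (ball 0 1) SlitP := by
  intro v hv
  rw [mem_ball_zero_iff] at hv
  rw [← neg_mem_slitPlane_iff, discToSlit, neg_neg]
  exact sq_mem_slitPlane ((re_cayley_pos_iff (ne_neg_one_of_norm_lt_one hv)).2 hv)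

lemma differentiableOn_discToSlit : DifferentiableOn ℂ discToSlit (ball 0 1) := fun _ hv =>
  ((differentiableAt_cayley (ne_neg_one_of_norm_lt_one
    (mem_ball_zero_iff.1 hv))).pow 2).neg.differentiableWithinAt

lemma exists_tendsto_ultrafilter_slitP {ι : Type*} (𝒰 : Ultrafilter ι) {W : ι → ℂ → ℂ}
    (hd : ∀ i, DifferentiableOn ℂ (W i) SlitP) (hm : ∀ i, MapsTo (W i) SlitP SlitP) {x₀ L : ℂ}
    (hx₀ : x₀ ∈ SlitP) (hL : L ∈ SlitP) (hlim : Tendsto (fun i => W i x₀) 𝒰 (𝓝 L)) :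
    ∃ ω : ℂ → ℂ, DifferentiableOn ℂ ω SlitP ∧ MapsTo ω SlitP SlitP ∧
      ∀ z ∈ SlitP, Tendsto (fun i => W i z) 𝒰 (𝓝 (ω z)) := by
  set V : ι → ℂ → ℂ := fun i z => slitToDisc (W i z)
  have hVd : ∀ i, DifferentiableOn ℂ (V i) SlitP := fun i =>
    differentiableOn_slitToDisc.comp (hd i) (hm i)
  have hVle : ∀ z ∈ SlitP, ∀ i, ‖V i z‖ ≤ 1 := fun z hz i =>
    (norm_slitToDisc_lt_one (hm i hz)).le
  obtain ⟨G, hGd, hG⟩ := exists_differentiableOn_tendsto_ultrafilter 𝒰 isOpen_slitP hVd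
    fun z hz => ⟨1, (isOpen_slitP.eventually_mem hz).mono hVle⟩
  have hGx₀ : G x₀ = slitToDisc L :=
    tendsto_nhds_unique (hG x₀ hx₀) <| ((differentiableOn_slitToDisc.continuousOn.continuousAt
      (isOpen_slitP.mem_nhds hL)).tendsto.comp hlim)
  have hGle : ∀ z ∈ SlitP, ‖G z‖ ≤ 1 := fun z hz =>
    le_of_tendsto (hG z hz).norm (Eventually.of_forall (hVle z hz))
  have hGball : MapsTo G SlitP (ball 0 1) :=
    mapsTo_ball_of_norm_le_of_exists_norm_lt isOpen_slitP isPreconnected_slitP hGd hGle hx₀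
      (hGx₀ ▸ norm_slitToDisc_lt_one hL)
  refine ⟨discToSlit ∘ G, differentiableOn_discToSlit.comp hGd hGball,
    mapsTo_discToSlit.comp hGball, fun z hz => ?_⟩
  have hcont : ContinuousAt discToSlit (G z) :=
    differentiableOn_discToSlit.continuousOn.continuousAt (isOpen_ball.mem_nhds (hGball hz))
  refine (hcont.tendsto.comp (hG z hz)).congr fun i => ?_
  exact discToSlit_slitToDisc (hm i hz)

end SlitDisc

section Twist

variable {K : Type*} [Field K] {η₁ η₂ : K → K} {z w : K}

/-- The map `w ↦ z η(w) / w`, with `z` frozen: the building block of the subordination iteration.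
It is bracketed as `z * (η w / w)` because `η w / w` is the factor that is controlled. -/
def twist (η : K → K) (z w : K) : K := z * (η w / w)

/-- The map `w ↦ w η₂(z η₁(w) / w) / η₁(w)` whose fixed point is the subordination function at `z`,
written as a composition of twists; see `subordinationMap_eq` for the displayed formula. -/
def subordinationMap (η₁ η₂ : K → K) (z w : K) : K := twist η₂ z (twist η₁ z w)

lemma subordinationMap_eq (hz : z ≠ 0) :
    subordinationMap η₁ η₂ z w = w * η₂ (twist η₁ z w) / η₁ w := by
  change z * (η₂ (twist η₁ z w) / (z * (η₁ w / w))) = _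
  field_simp

lemma isFixedPt_subordinationMap_iff (hz : z ≠ 0) (hw : w ≠ 0) (hηw : η₁ w ≠ 0) :
    IsFixedPt (subordinationMap η₁ η₂ z) w ↔ η₂ (twist η₁ z w) = η₁ w := by
  rw [IsFixedPt, subordinationMap_eq hz, div_eq_iff hηw, mul_right_inj' hw]

end Twist

/-- The properties on `(-∞, 0)` of the restriction to the real axis of the η-transform of a
probability measure on `[0, ∞)` other than a point mass at `0`. -/
structure IsRealEtaTransform (e : ℝ → ℝ) : Prop where
  mapsTo : MapsTo e (Iio 0) (Iio 0)
  strictMonoOn : StrictMonoOn e (Iio 0)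
  monotoneOn_div : MonotoneOn (fun x => e x / x) (Iio 0)
  continuousOn : ContinuousOn e (Iio 0)
  tendsto_zero : Tendsto e (𝓝[<] 0) (𝓝 0)

namespace IsRealEtaTransform

variable {e e₁ e₂ : ℝ → ℝ} {x v w : ℝ}

lemma mapsTo_twist (h : IsRealEtaTransform e) (hx : x < 0) :
    MapsTo (twist e x) (Iio 0) (Iio 0) := fun _ hw =>
  mul_neg_of_neg_of_pos hx (div_pos_of_neg_of_neg (h.mapsTo hw) hw)

lemma antitoneOn_twist (h : IsRealEtaTransform e) (hx : x < 0) :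
    AntitoneOn (twist e x) (Iio 0) := fun _ hv _ hw hvw =>
  mul_le_mul_of_nonpos_left (h.monotoneOn_div hv hw hvw) hx.le

lemma continuousOn_twist (h : IsRealEtaTransform e) (x : ℝ) :
    ContinuousOn (twist e x) (Iio 0) :=
  continuousOn_const.mul (h.continuousOn.div continuousOn_id fun _ hw => ne_of_lt hw)

lemma mapsTo_subordinationMap (h₁ : IsRealEtaTransform e₁) (h₂ : IsRealEtaTransform e₂)
    (hx : x < 0) : MapsTo (subordinationMap e₁ e₂ x) (Iio 0) (Iio 0) :=
  (h₂.mapsTo_twist hx).comp (h₁.mapsTo_twist hx)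

lemma monotoneOn_subordinationMap (h₁ : IsRealEtaTransform e₁) (h₂ : IsRealEtaTransform e₂)
    (hx : x < 0) : MonotoneOn (subordinationMap e₁ e₂ x) (Iio 0) :=
  (h₂.antitoneOn_twist hx).comp (h₁.antitoneOn_twist hx) (h₁.mapsTo_twist hx)

lemma continuousOn_subordinationMap (h₁ : IsRealEtaTransform e₁) (h₂ : IsRealEtaTransform e₂)
    (hx : x < 0) : ContinuousOn (subordinationMap e₁ e₂ x) (Iio 0) :=
  (h₂.continuousOn_twist x).comp (h₁.continuousOn_twist x) (h₁.mapsTo_twist hx)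

lemma subordinationMap_le_iff (h₁ : IsRealEtaTransform e₁) (hx : x < 0) (hw : w < 0) :
    subordinationMap e₁ e₂ x w ≤ w ↔ e₂ (twist e₁ x w) ≤ e₁ w := by
  rw [subordinationMap_eq hx.ne, div_le_iff_of_neg (h₁.mapsTo hw), mul_le_mul_left_of_neg hw]

lemma le_subordinationMap_iff (h₁ : IsRealEtaTransform e₁) (hx : x < 0) (hw : w < 0) :
    w ≤ subordinationMap e₁ e₂ x w ↔ e₁ w ≤ e₂ (twist e₁ x w) := by
  rw [subordinationMap_eq hx.ne, le_div_iff_of_neg (h₁.mapsTo hw), mul_le_mul_left_of_neg hw]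

lemma exists_subordinationMap_le (h₁ : IsRealEtaTransform e₁) (h₂ : IsRealEtaTransform e₂)
    (hx : x < 0) : ∃ b ∈ Ico x 0, subordinationMap e₁ e₂ x b ≤ b := by
  have hneg : e₂ (twist e₁ x x) < 0 := h₂.mapsTo (h₁.mapsTo_twist hx hx)
  obtain ⟨b, hb, hbx, hb0⟩ := ((h₁.tendsto_zero.eventually_const_lt hneg).and
    (Ioo_mem_nhdsLT hx)).exists
  refine ⟨b, ⟨hbx.le, hb0⟩, (h₁.subordinationMap_le_iff hx hb0).2 ?_⟩
  calc e₂ (twist e₁ x b) ≤ e₂ (twist e₁ x x) :=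
        h₂.strictMonoOn.monotoneOn (h₁.mapsTo_twist hx hb0) (h₁.mapsTo_twist hx hx)
          (h₁.antitoneOn_twist hx hx hb0 hbx.le)
    _ ≤ e₁ b := hb.le

lemma exists_le_subordinationMap (h₁ : IsRealEtaTransform e₁) (h₂ : IsRealEtaTransform e₂)
    (hx : x < 0) : ∃ a ≤ x, a ≤ subordinationMap e₁ e₂ x a := by
  obtain ⟨d, hed, hd : d < 0⟩ := ((h₂.tendsto_zero.eventually_const_lt (h₁.mapsTo hx)).and
    self_mem_nhdsWithin).exists
  set a := min x (twist e₂ x d)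
  have hax : a ≤ x := min_le_left _ _
  have ha : a < 0 := hax.trans_lt hx
  have hta := h₁.mapsTo_twist hx ha
  refine ⟨a, hax, ?_⟩
  rcases le_total (twist e₁ x a) d with htd | hdt
  · exact (min_le_right _ _).trans (h₂.antitoneOn_twist hx hta hd htd)
  · rw [h₁.le_subordinationMap_iff hx ha]
    calc e₁ a ≤ e₁ x := h₁.strictMonoOn.monotoneOn ha hx hax
      _ ≤ e₂ d := hed.le
      _ ≤ e₂ (twist e₁ x a) := h₂.strictMonoOn.monotoneOn hd hta hdt

lemma exists_tendsto_iterate (h₁ : IsRealEtaTransform e₁) (h₂ : IsRealEtaTransform e₂)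
    (hx : x < 0) : ∃ y < 0, IsFixedPt (subordinationMap e₁ e₂ x) y ∧
      Tendsto (fun n => (subordinationMap e₁ e₂ x)^[n] x) atTop (𝓝 y) := by
  obtain ⟨a, hax, ha⟩ := h₁.exists_le_subordinationMap h₂ hx
  obtain ⟨b, hb, hTb⟩ := h₁.exists_subordinationMap_le h₂ hx
  have hsub : Icc a b ⊆ Iio 0 := Icc_subset_Iio_iff (hax.trans hb.1) |>.2 hb.2
  have hmono := (h₁.monotoneOn_subordinationMap h₂ hx).mono hsub
  have hab : a ≤ b := hax.trans hb.1
  have hmaps : MapsTo (subordinationMap e₁ e₂ x) (Icc a b) (Icc a b) := fun y hy =>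
    ⟨ha.trans (hmono (left_mem_Icc.2 hab) hy hy.1), (hmono hy (right_mem_Icc.2 hab) hy.2).trans hTb⟩
  obtain ⟨y, hy, hfix, hlim⟩ := exists_tendsto_iterate_of_monotoneOn_Icc hmaps hmono
    ((h₁.continuousOn_subordinationMap h₂ hx).mono hsub) ⟨hax, hb.1⟩
  exact ⟨y, hsub hy, hfix, hlim⟩

lemma eq_of_isFixedPt (h₁ : IsRealEtaTransform e₁) (h₂ : IsRealEtaTransform e₂) (hx : x < 0)
    (hv : v < 0) (hw : w < 0) (hTv : IsFixedPt (subordinationMap e₁ e₂ x) v)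
    (hTw : IsFixedPt (subordinationMap e₁ e₂ x) w) : v = w := by
  wlog hvw : v ≤ w generalizing v w
  · exact (this hw hv hTw hTv (le_of_not_ge hvw)).symm
  rw [isFixedPt_subordinationMap_iff hx.ne hv.ne (h₁.mapsTo hv).ne] at hTv
  rw [isFixedPt_subordinationMap_iff hx.ne hw.ne (h₁.mapsTo hw).ne] at hTw
  refine hvw.eq_of_not_lt fun hlt => lt_irrefl (e₁ v) ?_
  calc e₁ v < e₁ w := h₁.strictMonoOn hv hw hlt
    _ = e₂ (twist e₁ x w) := hTw.symm
    _ ≤ e₂ (twist e₁ x v) := h₂.strictMonoOn.monotoneOn (h₁.mapsTo_twist hx hw)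
        (h₁.mapsTo_twist hx hv) (h₁.antitoneOn_twist hx hv hw hvw)
    _ = e₁ v := hTv

end IsRealEtaTransform

/-- An analytic map of `SlitP` that commutes with conjugation and does not decrease the argument
on `ℂ⁺`; the condition is imposed on `(-∞, 0)` as well, where it says that the map is negative. -/
structure IsArgNondecreasing (f : ℂ → ℂ) : Prop where
  differentiableOn : DifferentiableOn ℂ f SlitP
  map_conj : ∀ z ∈ SlitP, f (conj z) = conj (f z)
  arg_le : ∀ z, 0 < arg z → arg z ≤ arg (f z)

/-- The restriction of a complex function to the real axis, keeping only the real part. -/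
def realRestrict (f : ℂ → ℂ) (x : ℝ) : ℝ := (f x).re

namespace IsArgNondecreasing

variable {f η η₁ η₂ : ℂ → ℂ} {z w : ℂ} {x y : ℝ}

lemma mapsTo (hf : IsArgNondecreasing f) : MapsTo f SlitP SlitP := by
  intro z hz
  rcases arg_pos_or_arg_conj_pos hz with hpos | hpos
  · exact mem_slitP_of_arg_pos (hpos.trans_le (hf.arg_le z hpos))
  · rw [← conj_mem_slitP_iff, ← hf.map_conj z hz]
    exact mem_slitP_of_arg_pos (hpos.trans_le (hf.arg_le _ hpos))

lemma arg_apply_ofReal (hf : IsArgNondecreasing f) (hx : x < 0) : arg (f x) = Real.pi := by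
  have hargx : arg x = Real.pi := arg_ofReal_of_neg hx
  refine (arg_le_pi _).antisymm (hargx.ge.trans (hf.arg_le x ?_))
  exact hargx ▸ Real.pi_pos

lemma ofReal_realRestrict (hf : IsArgNondecreasing f) (hx : x < 0) :
    (realRestrict f x : ℂ) = f x :=
  conj_eq_iff_re.1 (conj_eq_iff_im.2 (arg_eq_pi_iff.1 (hf.arg_apply_ofReal hx)).2)

lemma realRestrict_neg (hf : IsArgNondecreasing f) (hx : x < 0) : realRestrict f x < 0 :=
  (arg_eq_pi_iff.1 (hf.arg_apply_ofReal hx)).1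

lemma im_nonneg (hf : IsArgNondecreasing f) (hz : 0 < arg z) : 0 ≤ (f z).im :=
  arg_nonneg_iff.1 (hz.le.trans (hf.arg_le z hz))

lemma im_div_nonneg (hf : IsArgNondecreasing f) (hz : 0 < arg z) : 0 ≤ (f z / z).im := by
  rw [← arg_nonneg_iff, arg_div_of_arg_le hz (hf.arg_le z hz), sub_nonneg]
  exact hf.arg_le z hz

lemma arg_twist (hη : IsArgNondecreasing η) (hz : 0 < arg z) (hzw : arg z ≤ arg w) :
    arg (twist η z w) = arg z + (arg (η w) - arg w) :=
  arg_mul_div_of_arg_le hz hzw (hη.arg_le w (hz.trans_le hzw))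

protected lemma id : IsArgNondecreasing fun z => z :=
  ⟨differentiableOn_id, fun _ _ => rfl, fun _ _ => le_rfl⟩

protected lemma twist (hη : IsArgNondecreasing η) (hf : IsArgNondecreasing f) :
    IsArgNondecreasing fun z => twist η z (f z) where
  differentiableOn := differentiableOn_id.mul <|
    (hη.differentiableOn.comp hf.differentiableOn hf.mapsTo).div hf.differentiableOn
      fun _ hz => ne_zero_of_mem_slitP (hf.mapsTo hz)
  map_conj z hz := by
    simp only [twist, hf.map_conj z hz, hη.map_conj _ (hf.mapsTo hz), map_mul, map_div₀]
  arg_le z hz := by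
    have hzf := hf.arg_le z hz
    rw [hη.arg_twist hz hzf]
    linarith [hη.arg_le _ (hz.trans_le hzf)]

protected lemma subordinationMap (h₁ : IsArgNondecreasing η₁) (h₂ : IsArgNondecreasing η₂)
    (hf : IsArgNondecreasing f) : IsArgNondecreasing fun z => subordinationMap η₁ η₂ z (f z) :=
  h₂.twist (h₁.twist hf)

lemma iterate_subordinationMap (h₁ : IsArgNondecreasing η₁) (h₂ : IsArgNondecreasing η₂) (n : ℕ) :
    IsArgNondecreasing fun z => (subordinationMap η₁ η₂ z)^[n] z := by
  induction n with
  | zero => exact IsArgNondecreasing.id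
  | succ n ih => simpa only [iterate_succ_apply'] using h₁.subordinationMap h₂ ih

lemma of_tendsto {ι : Type*} {l : Filter ι} [l.NeBot] {W : ι → ℂ → ℂ}
    (hW : ∀ i, IsArgNondecreasing (W i)) (hd : DifferentiableOn ℂ f SlitP)
    (hm : MapsTo f SlitP SlitP) (hlim : ∀ z ∈ SlitP, Tendsto (fun i => W i z) l (𝓝 (f z))) :
    IsArgNondecreasing f where
  differentiableOn := hd
  map_conj z hz := by
    refine tendsto_nhds_unique (hlim _ (conj_mem_slitP_iff.2 hz)) ?_
    simpa only [(hW _).map_conj z hz, comp_def] using (continuous_conj.tendsto _).comp (hlim z hz)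
  arg_le z hz := by
    have hzS := mem_slitP_of_arg_pos hz
    by_cases hfz : f z ∈ slitPlane
    · exact ge_of_tendsto ((continuousAt_arg hfz).tendsto.comp (hlim z hzS))
        (Eventually.of_forall fun i => (hW i).arg_le z hz)
    · have hargπ : arg (f z) = Real.pi := by
        by_contra hne
        exact hfz (mem_slitPlane_iff_arg.2 ⟨hne, ne_zero_of_mem_slitP (hm hzS)⟩)
      exact hargπ ▸ arg_le_pi z

lemma ofReal_twist (hη : IsArgNondecreasing η) (x : ℝ) (hy : y < 0) :
    ((twist (realRestrict η) x y : ℝ) : ℂ) = twist η x y := by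
  rw [twist, twist, ofReal_mul, ofReal_div, hη.ofReal_realRestrict hy]

lemma differentiableAt_ofReal (hf : IsArgNondecreasing f) (hx : x < 0) :
    DifferentiableAt ℂ f x :=
  hf.differentiableOn.differentiableAt (isOpen_slitP.mem_nhds (ofReal_mem_slitP_iff.2 hx))

lemma monotoneOn_realRestrict (hf : IsArgNondecreasing f) :
    MonotoneOn (realRestrict f) (Iio 0) :=
  monotoneOn_re_ofReal_of_im_nonneg (convex_Iio 0) (fun _ hx => hf.differentiableAt_ofReal hx)
    (fun _ hx => (arg_eq_pi_iff.1 (hf.arg_apply_ofReal hx)).2)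
    fun _ hz => hf.im_nonneg (arg_mem_Ioo_zero_pi_iff.2 hz).1

lemma monotoneOn_realRestrict_div (hf : IsArgNondecreasing f) :
    MonotoneOn (fun x => realRestrict f x / x) (Iio 0) := by
  have hdiv : ∀ x : ℝ, x < 0 → f x / x = ((realRestrict f x / x : ℝ) : ℂ) := fun x hx => by
    rw [ofReal_div, hf.ofReal_realRestrict hx]
  refine (monotoneOn_re_ofReal_of_im_nonneg (F := fun z => f z / z) (convex_Iio 0) (fun x hx => ?_)
    (fun x hx => ?_) fun z hz => hf.im_div_nonneg (arg_mem_Ioo_zero_pi_iff.2 hz).1).congr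
    fun x hx => ?_
  · exact (hf.differentiableAt_ofReal hx).div differentiableAt_id (ofReal_ne_zero.2 hx.ne)
  · rw [hdiv x hx, ofReal_im]
  · simp only [hdiv x hx, ofReal_re]

end IsArgNondecreasing

/-- The conditions on `η_j` in the subordination theorem, which characterize the η-transforms of
probability measures on `[0, ∞)` that are not point masses. -/
structure IsEtaTransform (η : ℂ → ℂ) : Prop extends IsArgNondecreasing η where
  arg_lt : ∀ z : ℂ, 0 < z.im → arg z < arg (η z) ∧ arg (η z) < Real.pi
  tendsto_zero : Tendsto (fun x : ℝ => η x) (𝓝[<] 0) (𝓝 0)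

lemma im_mul_im_pos_of_map_conj {f : ℂ → ℂ} (hconj : ∀ z ∈ SlitP, f (conj z) = conj (f z))
    (him : ∀ z : ℂ, 0 < z.im → 0 < (f z).im) {z : ℂ} (hz : z.im ≠ 0) : 0 < z.im * (f z).im := by
  rcases hz.lt_or_gt with hneg | hpos
  · have h := him (conj z) (by simpa using hneg)
    rw [hconj z (Or.inr hz), conj_im] at h
    exact mul_pos_of_neg_of_neg hneg (neg_pos.1 h)
  · exact mul_pos hpos (him z hpos)

namespace IsEtaTransform

variable {η η₁ η₂ ω : ℂ → ℂ} {v w z : ℂ} {x y : ℝ}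

lemma of_mapsTo (hd : DifferentiableOn ℂ η SlitP) (hm : MapsTo η SlitP SlitP)
    (hlim : Tendsto (fun x : ℝ => η x) (𝓝[<] 0) (𝓝 0))
    (harg : ∀ z : ℂ, 0 < z.im → arg z < arg (η z) ∧ arg (η z) < Real.pi)
    (hconj : ∀ z ∈ SlitP, η (conj z) = conj (η z)) : IsEtaTransform η where
  differentiableOn := hd
  map_conj := hconj
  arg_le z hz := by
    rcases (arg_le_pi z).lt_or_eq with hlt | hargz
    · exact (harg z (arg_mem_Ioo_zero_pi_iff.1 ⟨hz, hlt⟩)).1.le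
    · have hzS := mem_slitP_of_arg_pos hz
      have him : (η z).im = 0 := by
        rw [← conj_eq_iff_im, ← hconj z hzS, conj_eq_iff_im.2 (arg_eq_pi_iff.1 hargz).2]
      have hre : (η z).re < 0 := (hm hzS).resolve_right (not_not.2 him)
      exact hargz.le.trans (arg_eq_pi_iff.2 ⟨hre, him⟩).ge
  arg_lt := harg
  tendsto_zero := hlim

lemma im_pos (hη : IsEtaTransform η) (hz : 0 < z.im) : 0 < (η z).im :=
  have hlt := hη.arg_lt z hz
  arg_mem_Ioo_zero_pi_iff.1 ⟨(arg_mem_Ioo_zero_pi_iff.2 hz).1.trans hlt.1, hlt.2⟩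

lemma im_div_pos (hη : IsEtaTransform η) (hz : 0 < z.im) : 0 < (η z / z).im := by
  have hargz := arg_mem_Ioo_zero_pi_iff.2 hz
  have hlt := hη.arg_lt z hz
  rw [← arg_mem_Ioo_zero_pi_iff, arg_div_of_arg_le hargz.1 hlt.1.le]
  exact ⟨sub_pos.2 hlt.1, by linarith [hargz.1, hlt.2]⟩

lemma injOn_realRestrict (hη : IsEtaTransform η) : InjOn (realRestrict η) (Iio 0) := by
  intro a ha b hb hab
  wlog hle : a ≤ b generalizing a b
  · exact (this hb ha hab.symm (le_of_not_ge hle)).symm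
  refine hle.eq_of_not_lt fun hlt => ?_
  obtain ⟨c, hac, hcb⟩ := exists_between hlt
  have hc : c < 0 := hcb.trans hb
  have hconst : ∀ᶠ t : ℝ in 𝓝 c, η t = η a := by
    filter_upwards [Ioo_mem_nhds hac hcb] with t ht
    have ht0 : t < 0 := ht.2.trans hb
    have hta : realRestrict η t = realRestrict η a :=
      ((hη.monotoneOn_realRestrict ht0 hb ht.2.le).trans hab.ge).antisymm
        (hη.monotoneOn_realRestrict ha ht0 ht.1.le)
    rw [← hη.ofReal_realRestrict ht0, hta, hη.ofReal_realRestrict ha]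
  have heq : EqOn η (fun _ => η a) SlitP := eqOn_of_eventually_eq_ofReal isOpen_slitP
    isPreconnected_slitP hη.differentiableOn (differentiableOn_const _)
    (ofReal_mem_slitP_iff.2 hc) hconst
  have hI : η I = η a := heq (Or.inr (by simp))
  exact ((hη.arg_lt I (by simp)).2.trans_eq (hη.arg_apply_ofReal ha).symm).ne (by rw [hI])

protected lemma realRestrict (hη : IsEtaTransform η) : IsRealEtaTransform (realRestrict η) where
  mapsTo _ hx := hη.realRestrict_neg hx
  strictMonoOn := hη.monotoneOn_realRestrict.strictMonoOn_of_injOn hη.injOn_realRestrict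
  monotoneOn_div := hη.monotoneOn_realRestrict_div
  continuousOn _ hx := (continuous_re.continuousAt.comp
    ((hη.differentiableAt_ofReal hx).continuousAt.comp
      continuous_ofReal.continuousAt)).continuousWithinAt
  tendsto_zero := (continuous_re.tendsto' 0 0 zero_re).comp hη.tendsto_zero

lemma ofReal_subordinationMap (h₁ : IsEtaTransform η₁) (h₂ : IsEtaTransform η₂) (hx : x < 0)
    (hy : y < 0) : ((subordinationMap (realRestrict η₁) (realRestrict η₂) x y : ℝ) : ℂ) =
      subordinationMap η₁ η₂ x y := by
  rw [subordinationMap, h₂.ofReal_twist x (h₁.realRestrict.mapsTo_twist hx hy),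
    h₁.ofReal_twist x hy, subordinationMap]

lemma ofReal_iterate_subordinationMap (h₁ : IsEtaTransform η₁) (h₂ : IsEtaTransform η₂)
    (hx : x < 0) (n : ℕ) :
    (((subordinationMap (realRestrict η₁) (realRestrict η₂) x)^[n] x : ℝ) : ℂ) =
      (subordinationMap η₁ η₂ x)^[n] x := by
  induction n with
  | zero => rfl
  | succ n ih =>
    have hneg := (h₁.realRestrict.mapsTo_subordinationMap h₂.realRestrict hx).iterate n hx
    rw [iterate_succ_apply', iterate_succ_apply', h₁.ofReal_subordinationMap h₂ hx hneg, ih]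

lemma im_eq_zero_of_isFixedPt (h₁ : IsEtaTransform η₁) (h₂ : IsEtaTransform η₂) (hx : x < 0)
    (hw : w ∈ SlitP) (hfix : IsFixedPt (subordinationMap η₁ η₂ x) w) : w.im = 0 := by
  by_contra him
  have hη : η₂ (twist η₁ x w) = η₁ w :=
    (isFixedPt_subordinationMap_iff (ofReal_ne_zero.2 hx.ne) (ne_zero_of_mem_slitP hw)
      (ne_zero_of_mem_slitP (h₁.mapsTo hw))).1 hfix
  have hw₁ : 0 < w.im * (η₁ w).im :=
    im_mul_im_pos_of_map_conj h₁.map_conj (fun _ => h₁.im_pos) him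
  have hquot : 0 < w.im * (η₁ w / w).im :=
    im_mul_im_pos_of_map_conj (f := fun z => η₁ z / z)
      (fun z hz => by simp only [h₁.map_conj z hz, map_div₀]) (fun _ => h₁.im_div_pos) him
  have htwist : w.im * (twist η₁ x w).im < 0 := by
    rw [twist, im_ofReal_mul, mul_left_comm]
    exact mul_neg_of_neg_of_pos hx hquot
  have hη₁ : 0 < (twist η₁ x w).im * (η₁ w).im := hη ▸
    im_mul_im_pos_of_map_conj h₂.map_conj (fun _ => h₂.im_pos) (right_ne_zero_of_mul htwist.ne)
  nlinarith [mul_pos hw₁ hη₁, sq_nonneg (η₁ w).im]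

lemma eq_of_isFixedPt_ofReal (h₁ : IsEtaTransform η₁) (h₂ : IsEtaTransform η₂) (hx : x < 0)
    (hv : v ∈ SlitP) (hw : w ∈ SlitP) (hTv : IsFixedPt (subordinationMap η₁ η₂ x) v)
    (hTw : IsFixedPt (subordinationMap η₁ η₂ x) w) : v = w := by
  have hreal : ∀ u ∈ SlitP, IsFixedPt (subordinationMap η₁ η₂ x) u → ∃ y : ℝ, y < 0 ∧ y = u ∧
      IsFixedPt (subordinationMap (realRestrict η₁) (realRestrict η₂) x) y := by
    intro u hu hTu
    have huy : (u.re : ℂ) = u :=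
      conj_eq_iff_re.1 (conj_eq_iff_im.2 (h₁.im_eq_zero_of_isFixedPt h₂ hx hu hTu))
    have hneg : u.re < 0 := ofReal_mem_slitP_iff.1 (huy ▸ hu)
    refine ⟨u.re, hneg, huy, ofReal_injective ?_⟩
    rw [h₁.ofReal_subordinationMap h₂ hx hneg, huy, hTu]
  obtain ⟨a, ha, rfl, hTa⟩ := hreal v hv hTv
  obtain ⟨b, hb, rfl, hTb⟩ := hreal w hw hTw
  rw [h₁.realRestrict.eq_of_isFixedPt h₂.realRestrict hx ha hb hTa hTb]

lemma eqOn_of_isFixedPt (h₁ : IsEtaTransform η₁) (h₂ : IsEtaTransform η₂) {ω₁ ω₂ : ℂ → ℂ}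
    (hd₁ : DifferentiableOn ℂ ω₁ SlitP) (hd₂ : DifferentiableOn ℂ ω₂ SlitP)
    (hm₁ : MapsTo ω₁ SlitP SlitP) (hm₂ : MapsTo ω₂ SlitP SlitP)
    (hfix₁ : ∀ z ∈ SlitP, IsFixedPt (subordinationMap η₁ η₂ z) (ω₁ z))
    (hfix₂ : ∀ z ∈ SlitP, IsFixedPt (subordinationMap η₁ η₂ z) (ω₂ z)) : EqOn ω₁ ω₂ SlitP := by
  refine eqOn_of_eventually_eq_ofReal (x := -1) isOpen_slitP isPreconnected_slitP hd₁ hd₂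
    (ofReal_mem_slitP_iff.2 neg_one_lt_zero) ?_
  filter_upwards [eventually_lt_nhds neg_one_lt_zero] with t ht
  have htS := ofReal_mem_slitP_iff.2 ht
  exact h₁.eq_of_isFixedPt_ofReal h₂ ht (hm₁ htS) (hm₂ htS) (hfix₁ t htS) (hfix₂ t htS)

lemma exists_tendsto_iterate_ofReal (h₁ : IsEtaTransform η₁) (h₂ : IsEtaTransform η₂)
    (hx : x < 0) : ∃ L ∈ SlitP, IsFixedPt (subordinationMap η₁ η₂ x) L ∧
      Tendsto (fun n => (subordinationMap η₁ η₂ x)^[n] x) atTop (𝓝 L) := by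
  obtain ⟨y, hy, hfix, hlim⟩ := h₁.realRestrict.exists_tendsto_iterate h₂.realRestrict hx
  refine ⟨y, ofReal_mem_slitP_iff.2 hy, ?_, ?_⟩
  · rw [IsFixedPt, ← h₁.ofReal_subordinationMap h₂ hx hy, hfix]
  · simpa only [comp_def, h₁.ofReal_iterate_subordinationMap h₂ hx] using
      (continuous_ofReal.tendsto y).comp hlim

lemma exists_isFixedPt_subordinationMap (h₁ : IsEtaTransform η₁) (h₂ : IsEtaTransform η₂) :
    ∃ ω : ℂ → ℂ, IsArgNondecreasing ω ∧
      ∀ z ∈ SlitP, IsFixedPt (subordinationMap η₁ η₂ z) (ω z) := by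
  have hW := h₁.iterate_subordinationMap h₂.toIsArgNondecreasing
  obtain ⟨L, hL, -, hLlim⟩ := h₁.exists_tendsto_iterate_ofReal h₂ neg_one_lt_zero
  obtain ⟨ω, hωd, hωm, hlim⟩ := exists_tendsto_ultrafilter_slitP (hyperfilter ℕ)
    (fun n => (hW n).differentiableOn) (fun n => (hW n).mapsTo)
    (ofReal_mem_slitP_iff.2 neg_one_lt_zero) hL (hLlim.mono_left Nat.hyperfilter_le_atTop)
  have hω := IsArgNondecreasing.of_tendsto hW hωd hωm hlim
  refine ⟨ω, hω, eqOn_of_eventually_eq_ofReal (x := -1) isOpen_slitP isPreconnected_slitP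
    (h₁.subordinationMap h₂.toIsArgNondecreasing hω).differentiableOn hωd
    (ofReal_mem_slitP_iff.2 neg_one_lt_zero) ?_⟩
  filter_upwards [eventually_lt_nhds neg_one_lt_zero] with t ht
  obtain ⟨y, -, hfix, hy⟩ := h₁.exists_tendsto_iterate_ofReal h₂ ht
  have hωt : ω t = y := tendsto_nhds_unique (hlim t (ofReal_mem_slitP_iff.2 ht))
    (hy.mono_left Nat.hyperfilter_le_atTop)
  rw [hωt, hfix]

lemma arg_twist_mem_Ico (hη : IsEtaTransform η) (hz : 0 < z.im) (hzw : arg z ≤ arg w) :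
    arg (twist η z w) ∈ Ico (arg z) Real.pi := by
  have hargz := arg_mem_Ioo_zero_pi_iff.2 hz
  have hw : 0 < arg w := hargz.1.trans_le hzw
  rw [hη.arg_twist hargz.1 hzw]
  refine ⟨by linarith [hη.arg_le w hw], ?_⟩
  rcases (arg_le_pi w).lt_or_eq with hlt | heq
  · linarith [(hη.arg_lt w (arg_mem_Ioo_zero_pi_iff.1 ⟨hw, hlt⟩)).2]
  · linarith [arg_le_pi (η w), hargz.2]

lemma lt_arg_twist (hη : IsEtaTransform η) (hz : 0 < z.im) (hzw : arg z ≤ arg w)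
    (hw : arg w < Real.pi) : arg z < arg (twist η z w) := by
  have hargz := (arg_mem_Ioo_zero_pi_iff.2 hz).1
  rw [hη.arg_twist hargz hzw, lt_add_iff_pos_right, sub_pos]
  exact (hη.arg_lt w (arg_mem_Ioo_zero_pi_iff.1 ⟨hargz.trans_le hzw, hw⟩)).1

lemma arg_mem_Ioo_of_isFixedPt (h₁ : IsEtaTransform η₁) (h₂ : IsEtaTransform η₂) (hz : 0 < z.im)
    (hzw : arg z ≤ arg w) (hfix : IsFixedPt (subordinationMap η₁ η₂ z) w) :
    arg w ∈ Ioo (arg z) Real.pi := by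
  obtain ⟨hle, hlt⟩ := h₁.arg_twist_mem_Ico hz hzw
  rw [← hfix.eq]
  exact ⟨h₂.lt_arg_twist hz hle hlt, (h₂.arg_twist_mem_Ico hz hle).2⟩

end IsEtaTransform

/-- Given analytic `η₁, η₂ : ℂ ∖ [0,∞) → ℂ ∖ [0,∞)` with `η_j(0−) = 0`,
`π > arg η_j(z) > arg z` on `ℂ⁺`, and `η_j(conj z) = conj(η_j(z))`, there exists
a unique analytic `ω : ℂ ∖ [0,∞) → ℂ ∖ [0,∞)` such that
`ω(z) = ω(z)·η₂(z·η₁(ω(z))/ω(z))/η₁(ω(z))` for all `z ∈ ℂ ∖ [0,∞)`; moreover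
`arg z < arg ω(z) < π` for all `z ∈ ℂ⁺`. -/
theorem subordination_with_omega
    (η₁ η₂ : ℂ → ℂ)
    (hd₁ : DifferentiableOn ℂ η₁ SlitP) (hm₁ : Set.MapsTo η₁ SlitP SlitP)
    (hd₂ : DifferentiableOn ℂ η₂ SlitP) (hm₂ : Set.MapsTo η₂ SlitP SlitP)
    (hlim₁ : Tendsto (fun x : ℝ => η₁ (Complex.ofReal x)) (𝓝[<] (0:ℝ)) (𝓝 0))
    (hlim₂ : Tendsto (fun x : ℝ => η₂ (Complex.ofReal x)) (𝓝[<] (0:ℝ)) (𝓝 0))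
    (harg₁ : ∀ z : ℂ, 0 < z.im → z.arg < (η₁ z).arg ∧ (η₁ z).arg < Real.pi)
    (harg₂ : ∀ z : ℂ, 0 < z.im → z.arg < (η₂ z).arg ∧ (η₂ z).arg < Real.pi)
    (hconj₁ : ∀ z ∈ SlitP, η₁ ((starRingEnd ℂ) z) = (starRingEnd ℂ) (η₁ z))
    (hconj₂ : ∀ z ∈ SlitP, η₂ ((starRingEnd ℂ) z) = (starRingEnd ℂ) (η₂ z)) :
    ∃ ω : ℂ → ℂ,
      DifferentiableOn ℂ ω SlitP ∧ Set.MapsTo ω SlitP SlitP ∧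
      (∀ z ∈ SlitP, ω z = ω z * η₂ (z * η₁ (ω z) / ω z) / η₁ (ω z)) ∧
      (∀ z : ℂ, 0 < z.im → z.arg < (ω z).arg ∧ (ω z).arg < Real.pi) ∧
      (∀ ω' : ℂ → ℂ, DifferentiableOn ℂ ω' SlitP → Set.MapsTo ω' SlitP SlitP →
        (∀ z ∈ SlitP, ω' z = ω' z * η₂ (z * η₁ (ω' z) / ω' z) / η₁ (ω' z)) →
        Set.EqOn ω ω' SlitP) := by
  have h₁ := IsEtaTransform.of_mapsTo hd₁ hm₁ hlim₁ harg₁ hconj₁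
  have h₂ := IsEtaTransform.of_mapsTo hd₂ hm₂ hlim₂ harg₂ hconj₂
  have hfix_iff : ∀ z ∈ SlitP, ∀ w : ℂ,
      IsFixedPt (subordinationMap η₁ η₂ z) w ↔ w = w * η₂ (z * η₁ w / w) / η₁ w := fun z hz w => by
    rw [IsFixedPt, subordinationMap_eq (ne_zero_of_mem_slitP hz), twist, mul_div_assoc z, eq_comm]
  obtain ⟨ω, hω, hfix⟩ := h₁.exists_isFixedPt_subordinationMap h₂
  refine ⟨ω, hω.differentiableOn, hω.mapsTo, fun z hz => (hfix_iff z hz _).1 (hfix z hz),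
    fun z hz => ?_, fun ω' hd' hm' heq' => ?_⟩
  · exact h₁.arg_mem_Ioo_of_isFixedPt h₂ hz (hω.arg_le z (arg_mem_Ioo_zero_pi_iff.2 hz).1)
      (hfix z (Or.inr hz.ne'))
  · exact h₁.eqOn_of_isFixedPt h₂ hω.differentiableOn hd' hω.mapsTo hm' hfix
      fun z hz => (hfix_iff z hz _).2 (heq' z hz)
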